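/- Consider the semiparametric contextual bandit problem with two actions under the environment and boundedness assumptions, run with the following strategy: at each round t, if one action is eliminated by the other according to the rule ⟨θ̂_t, z_{t,b} − z_{t,a}⟩ > γ(T)·‖z_{t,a} − z_{t,b}‖_{Γ_t⁻¹}, play the surviving action deterministically; otherwise play one of the two actions uniformly at random; let π_t denote the resulting action distribution and μ_t := E_{a∼π_t}[z_{t,a}]. Assume that ‖θ̂_t − θ‖_{Γ_t} ≤ γ(T) holds for all t ∈ [T]. Then for any δ ∈ (0,1), with probability at least 1 − δ, Reg(T) ≤ √(2T·log(1/δ)) + 2γ(T)·Σ_{t=1}^T √(tr(Γ_t⁻¹ · Cov_{b∼π_t}(z_{t,b}))). -/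

import Mathlib

open MeasureTheory ProbabilityTheory Matrix Finset

/-!
On the confidence event, Cauchy–Schwarz in the `Γ_t`-norm bounds the error of every estimated gap
by `γ ‖z_b - z_c‖_{Γ_t⁻¹}`. Hence an eliminated action is truly suboptimal, and a deterministic
round costs nothing. If neither action is eliminated, the true gap is at most
`2 γ ‖z_b - z_c‖_{Γ_t⁻¹}`; the uniform distribution loses half of the gap on average, and its
feature covariance is `¼ (z_b - z_c)(z_b - z_c)ᵀ`, so the average loss is at most
`2 γ √(tr (Γ_t⁻¹ Cov))`. The actual rewards of the played actions differ from these averages by a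
martingale whose increments are, conditionally on the past, centred and range over an interval of
length `2`; Hoeffding's lemma for the conditional law and the Azuma–Hoeffding inequality
then give the term `√(2 T log (1/δ))`.
-/

section Mahalanobis

variable {n : Type*} [Fintype n]

/-- The Mahalanobis norm `‖x‖_M = √(xᵀ M x)`; it is meant for positive semidefinite `M`, as the
square root of a negative number is `0`. -/
noncomputable def mahalanobisNorm (M : Matrix n n ℝ) (x : n → ℝ) : ℝ := √(x ⬝ᵥ M *ᵥ x)

lemma mahalanobisNorm_nonneg (M : Matrix n n ℝ) (x : n → ℝ) : 0 ≤ mahalanobisNorm M x :=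
  Real.sqrt_nonneg _

lemma mahalanobisNorm_sub_comm (M : Matrix n n ℝ) (x y : n → ℝ) :
    mahalanobisNorm M (x - y) = mahalanobisNorm M (y - x) := by
  rw [mahalanobisNorm, mahalanobisNorm, ← neg_sub y x, mulVec_neg, neg_dotProduct_neg]

lemma posSemidef_dotProduct_mulVec_sq_le {M : Matrix n n ℝ} (hM : M.PosSemidef) (x y : n → ℝ) :
    (x ⬝ᵥ M *ᵥ y) ^ 2 ≤ (x ⬝ᵥ M *ᵥ x) * (y ⬝ᵥ M *ᵥ y) := by
  classical
  have hsymm : y ⬝ᵥ M *ᵥ x = x ⬝ᵥ M *ᵥ y := by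
    have hM' : Mᵀ = M := by simpa using hM.isHermitian.eq
    rw [dotProduct_mulVec, ← mulVec_transpose, hM', dotProduct_comm]
  have hCS := (toBilin' M).apply_mul_apply_le_of_forall_zero_le
    (fun v => by simpa [toBilin'_apply'] using hM.dotProduct_mulVec_nonneg v) x y
  simpa only [toBilin'_apply', hsymm, ← sq] using hCS

lemma abs_dotProduct_le_mahalanobisNorm_mul_inv [DecidableEq n] {G : Matrix n n ℝ}
    (hG : G.PosDef) (x y : n → ℝ) :
    |x ⬝ᵥ y| ≤ mahalanobisNorm G x * mahalanobisNorm G⁻¹ y := by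
  have hGinv : G *ᵥ (G⁻¹ *ᵥ y) = y := by
    rw [mulVec_mulVec, mul_nonsing_inv G ((isUnit_iff_isUnit_det G).mp hG.isUnit), one_mulVec]
  have hCS := posSemidef_dotProduct_mulVec_sq_le hG.posSemidef x (G⁻¹ *ᵥ y)
  rw [hGinv, dotProduct_comm (G⁻¹ *ᵥ y) y] at hCS
  have hx : 0 ≤ x ⬝ᵥ G *ᵥ x := by simpa using hG.posSemidef.dotProduct_mulVec_nonneg x
  rw [mahalanobisNorm, mahalanobisNorm, ← Real.sqrt_mul hx]
  exact Real.abs_le_sqrt hCS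

lemma abs_dotProduct_le_sqrt_mul_sqrt (x y : n → ℝ) : |x ⬝ᵥ y| ≤ √(x ⬝ᵥ x) * √(y ⬝ᵥ y) := by
  classical
  simpa only [mahalanobisNorm, inv_one, one_mulVec] using
    abs_dotProduct_le_mahalanobisNorm_mul_inv PosDef.one x y

end Mahalanobis

lemma posDef_smul_one_add_sum_vecMulVec {n ι : Type*} [Finite n] [DecidableEq n] {c : ℝ}
    (hc : 0 < c) (s : Finset ι) (v : ι → n → ℝ) :
    (c • (1 : Matrix n n ℝ) + ∑ i ∈ s, vecMulVec (v i) (v i)).PosDef := by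
  have := Fintype.ofFinite n
  exact (PosDef.one.smul hc).add_posSemidef <| posSemidef_sum s fun i _ => by
    simpa using posSemidef_vecMulVec_self_star (v i)

section Policy

variable {A n : Type*} [Fintype A]

/-- The mean feature vector `E_{b∼p}[z_b]` under the action distribution `p`. -/
def policyMean (p : A → ℝ) (z : A → n → ℝ) : n → ℝ := ∑ b, p b • z b

/-- The feature covariance `Cov_{b∼p}(z_b)` under the action distribution `p`. -/
def policyCov (p : A → ℝ) (z : A → n → ℝ) : Matrix n n ℝ :=
  ∑ b, p b • vecMulVec (z b) (z b) - vecMulVec (policyMean p z) (policyMean p z)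

lemma univ_eq_pair_of_card_eq_two [DecidableEq A] (hcard : Fintype.card A = 2) {b c : A}
    (hbc : b ≠ c) : (univ : Finset A) = {b, c} :=
  (eq_of_subset_of_card_le (subset_univ _) (by rw [card_univ, hcard, card_pair hbc])).symm

lemma eq_or_eq_of_card_eq_two (hcard : Fintype.card A = 2) {b c : A} (hbc : b ≠ c) (e : A) :
    e = b ∨ e = c := by
  classical
  simpa [univ_eq_pair_of_card_eq_two hcard hbc] using mem_univ e

lemma dotProduct_policyMean [Fintype n] (θ : n → ℝ) (p : A → ℝ) (z : A → n → ℝ) :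
    θ ⬝ᵥ policyMean p z = ∑ b, p b * (θ ⬝ᵥ z b) := by
  simp only [policyMean, dotProduct_sum, dotProduct_smul, smul_eq_mul]

lemma policyMean_single [DecidableEq A] (b : A) (z : A → n → ℝ) :
    policyMean (Pi.single b 1) z = z b := by
  simp [policyMean, Pi.single_apply]

lemma policyMean_uniform (hcard : Fintype.card A = 2) {p : A → ℝ} (hp : ∀ b, p b = 1 / 2)
    {b c : A} (hbc : b ≠ c) (z : A → n → ℝ) :
    policyMean p z = (1 / 2 : ℝ) • (z b + z c) := by
  classical
  rw [policyMean, univ_eq_pair_of_card_eq_two hcard hbc, sum_pair hbc, hp, hp, smul_add]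

lemma policyCov_uniform (hcard : Fintype.card A = 2) {p : A → ℝ} (hp : ∀ b, p b = 1 / 2)
    {b c : A} (hbc : b ≠ c) (z : A → n → ℝ) :
    policyCov p z = (1 / 2 : ℝ) ^ 2 • vecMulVec (z b - z c) (z b - z c) := by
  classical
  rw [policyCov, policyMean_uniform hcard hp hbc, univ_eq_pair_of_card_eq_two hcard hbc,
    sum_pair hbc, hp, hp]
  ext i j
  simp only [Matrix.sub_apply, Matrix.add_apply, Matrix.smul_apply, vecMulVec_apply,
    Pi.add_apply, Pi.sub_apply, Pi.smul_apply, smul_eq_mul]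
  ring

lemma sqrt_trace_mul_policyCov_uniform [Fintype n] (hcard : Fintype.card A = 2) {p : A → ℝ}
    (hp : ∀ b, p b = 1 / 2) {b c : A} (hbc : b ≠ c) (z : A → n → ℝ) (M : Matrix n n ℝ) :
    √((M * policyCov p z).trace) = 1 / 2 * mahalanobisNorm M (z b - z c) := by
  rw [policyCov_uniform hcard hp hbc, Matrix.mul_smul, trace_smul, mul_vecMulVec, trace_vecMulVec,
    dotProduct_comm, smul_eq_mul, Real.sqrt_mul (by positivity), Real.sqrt_sq (by norm_num),
    mahalanobisNorm]

end Policy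

section Elimination

variable {A n : Type*} [Fintype n] [DecidableEq n] {G : Matrix n n ℝ} {γ : ℝ} {θ θhat : n → ℝ}
  {z : A → n → ℝ} {p : A → ℝ} {b c : A}

/-- Action `b` eliminates action `c`: the estimated advantage of `b` over `c` exceeds the
confidence width `γ ‖z_c - z_b‖_{G⁻¹}`. -/
def Eliminates (G : Matrix n n ℝ) (γ : ℝ) (θhat : n → ℝ) (z : A → n → ℝ) (b c : A) : Prop :=
  γ * mahalanobisNorm G⁻¹ (z c - z b) < θhat ⬝ᵥ (z b - z c)

/-- The elimination rule for two actions: `p` is the uniform distribution if no action is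
eliminated, and the Dirac mass at the surviving action otherwise. -/
structure IsEliminationPolicy [DecidableEq A] (G : Matrix n n ℝ) (γ : ℝ) (θhat : n → ℝ)
    (z : A → n → ℝ) (p : A → ℝ) : Prop where
  eq_half : (∀ b c, ¬ Eliminates G γ θhat z b c) → ∀ b, p b = 1 / 2
  eq_single : ∀ b c, Eliminates G γ θhat z b c → p = Pi.single b 1

lemma abs_dotProduct_sub_le_of_mahalanobisNorm_le (hG : G.PosDef)
    (hest : mahalanobisNorm G (θhat - θ) ≤ γ) (y : n → ℝ) :
    |θhat ⬝ᵥ y - θ ⬝ᵥ y| ≤ γ * mahalanobisNorm G⁻¹ y := by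
  rw [← sub_dotProduct]
  exact (abs_dotProduct_le_mahalanobisNorm_mul_inv hG _ y).trans
    (mul_le_mul_of_nonneg_right hest (mahalanobisNorm_nonneg _ _))

namespace Eliminates

lemma ne (h : Eliminates G γ θhat z b c) : b ≠ c := by
  rintro rfl
  simp [Eliminates, mahalanobisNorm] at h

lemma asymm (hγ : 0 ≤ γ) (h : Eliminates G γ θhat z b c) : ¬ Eliminates G γ θhat z c b := by
  intro h'
  have hwidth (x : n → ℝ) : 0 ≤ γ * mahalanobisNorm G⁻¹ x :=
    mul_nonneg hγ (mahalanobisNorm_nonneg _ _)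
  have hpos : 0 < θhat ⬝ᵥ (z b - z c) := (hwidth _).trans_lt h
  have hneg : 0 < θhat ⬝ᵥ (z c - z b) := (hwidth _).trans_lt h'
  rw [← neg_sub, dotProduct_neg] at hneg
  linarith

lemma dotProduct_lt (hG : G.PosDef) (hest : mahalanobisNorm G (θhat - θ) ≤ γ)
    (h : Eliminates G γ θhat z b c) : θ ⬝ᵥ z c < θ ⬝ᵥ z b := by
  have hconf := abs_dotProduct_sub_le_of_mahalanobisNorm_le hG hest (z b - z c)
  rw [mahalanobisNorm_sub_comm] at hconf
  have hlt : γ * mahalanobisNorm G⁻¹ (z c - z b) < θhat ⬝ᵥ (z b - z c) := h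
  have hpos : 0 < θ ⬝ᵥ (z b - z c) := by linarith [(abs_le.mp hconf).2]
  rwa [dotProduct_sub, sub_pos] at hpos

end Eliminates

lemma dotProduct_sub_le_of_not_eliminates (hG : G.PosDef)
    (hest : mahalanobisNorm G (θhat - θ) ≤ γ) (h : ¬ Eliminates G γ θhat z b c) :
    θ ⬝ᵥ (z b - z c) ≤ 2 * γ * mahalanobisNorm G⁻¹ (z b - z c) := by
  have hconf := abs_dotProduct_sub_le_of_mahalanobisNorm_le hG hest (z b - z c)
  rw [Eliminates, not_lt, mahalanobisNorm_sub_comm] at h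
  linarith [(abs_le.mp hconf).1]

lemma isEliminationPolicy_of_survival [Fintype A] [DecidableEq A] (hcard : Fintype.card A = 2)
    (hγ : 0 ≤ γ) {surv : A → Prop} (hsurv : ∀ b, surv b ↔ ∀ c, ¬ Eliminates G γ θhat z c b)
    (hboth : (∀ b, surv b) → ∀ b, p b = 1 / 2)
    (hone : ∀ b, surv b → (∃ c, ¬ surv c) → ∀ c, p c = if c = b then 1 else 0) :
    IsEliminationPolicy G γ θhat z p where
  eq_half hnone := hboth fun b => (hsurv b).mpr fun c => hnone c b
  eq_single b c h := by
    have hc : ¬ surv c := fun hc => (hsurv c).mp hc b h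
    have hb : surv b := (hsurv b).mpr fun e => by
      rcases eq_or_eq_of_card_eq_two hcard h.ne e with rfl | rfl
      · exact fun h' => h'.ne rfl
      · exact h.asymm hγ
    ext e
    rw [hone b hb ⟨c, hc⟩, Pi.single_apply]

namespace IsEliminationPolicy

variable [Fintype A] [DecidableEq A]

lemma dotProduct_sub_policyMean_le (h : IsEliminationPolicy G γ θhat z p)
    (hcard : Fintype.card A = 2) (hG : G.PosDef) (hest : mahalanobisNorm G (θhat - θ) ≤ γ)
    (o : A) :
    θ ⬝ᵥ (z o - policyMean p z) ≤ 2 * γ * √((G⁻¹ * policyCov p z).trace) := by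
  by_cases hnone : ∀ b c, ¬ Eliminates G γ θhat z b c
  · have hp := h.eq_half hnone
    have : Nontrivial A := Fintype.one_lt_card_iff_nontrivial.mp (by omega)
    obtain ⟨c, hc⟩ := exists_ne o
    calc θ ⬝ᵥ (z o - policyMean p z) = 1 / 2 * θ ⬝ᵥ (z o - z c) := by
          rw [policyMean_uniform hcard hp hc.symm]
          simp only [dotProduct_sub, dotProduct_smul, dotProduct_add, smul_eq_mul]
          ring
      _ ≤ 1 / 2 * (2 * γ * mahalanobisNorm G⁻¹ (z o - z c)) := by
          gcongr
          exact dotProduct_sub_le_of_not_eliminates hG hest (hnone o c)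
      _ = 2 * γ * √((G⁻¹ * policyCov p z).trace) := by
          rw [sqrt_trace_mul_policyCov_uniform hcard hp hc.symm]
          ring
  · push Not at hnone
    obtain ⟨b, c, hbc⟩ := hnone
    have hopt : θ ⬝ᵥ z o ≤ θ ⬝ᵥ z b := by
      rcases eq_or_eq_of_card_eq_two hcard hbc.ne o with rfl | rfl
      · exact le_rfl
      · exact (hbc.dotProduct_lt hG hest).le
    have hγ : 0 ≤ γ := (mahalanobisNorm_nonneg _ _).trans hest
    rw [h.eq_single b c hbc, policyMean_single, dotProduct_sub]
    exact (sub_nonpos.mpr hopt).trans (by positivity)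

end IsEliminationPolicy

end Elimination

section SubGaussian

variable {Ω : Type*} {m m0 : MeasurableSpace Ω} {μ : Measure Ω} {X : Ω → ℝ} {a b : ℝ}

lemma one_sub_le_measure_le_of_hasSubgaussianMGF [IsProbabilityMeasure μ] {S : Ω → ℝ} {c : NNReal}
    (hS : HasSubgaussianMGF S c μ) {δ : ℝ} (hδ : 0 < δ) (hδ1 : δ ≤ 1) :
    ENNReal.ofReal (1 - δ) ≤ μ {ω | S ω ≤ √(2 * c * Real.log (1 / δ))} := by
  have hlog : 0 ≤ Real.log (1 / δ) := Real.log_nonneg (one_le_one_div hδ hδ1)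
  set ε := √(2 * c * Real.log (1 / δ)) with hε
  have htail : μ {ω | ε < S ω} ≤ ENNReal.ofReal δ := by
    -- The Chernoff exponent divides by `c`, so `c = 0` is treated apart: there `S = 0` a.s.
    rcases eq_or_ne c 0 with rfl | hc
    · have hnull : μ {ω | ε < S ω} = 0 := by
        rw [measure_eq_zero_iff_ae_notMem]
        filter_upwards [hS.ae_eq_zero_of_hasSubgaussianMGF_zero] with ω hω
        simp [hω, hε]
      exact hnull.trans_le zero_le
    · rw [← ofReal_measureReal]
      refine ENNReal.ofReal_le_ofReal ?_
      calc μ.real {ω | ε < S ω} ≤ μ.real {ω | ε ≤ S ω} :=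
            measureReal_mono (Set.ofPred_subset_ofPred.mpr fun _ => le_of_lt)
        _ ≤ Real.exp (-ε ^ 2 / (2 * c)) := hS.measure_ge_le (Real.sqrt_nonneg _)
        _ = Real.exp (Real.log δ) := by
            rw [hε, Real.sq_sqrt (by positivity), one_div, Real.log_inv]
            field_simp
        _ = δ := Real.exp_log hδ
  have hcompl : {ω | S ω ≤ ε} = {ω | ε < S ω}ᶜ := by
    ext ω
    simp
  rw [hcompl, prob_compl_eq_one_sub₀ (nullMeasurableSet_lt aemeasurable_const hS.aemeasurable),
    ENNReal.ofReal_sub _ hδ.le, ENNReal.ofReal_one]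
  exact tsub_le_tsub_left htail 1

lemma condExp_mem_Icc_of_mem_Icc [IsFiniteMeasure μ] (hm : m ≤ m0) (hX : AEMeasurable X μ)
    (hXab : ∀ᵐ ω ∂μ, X ω ∈ Set.Icc a b) : ∀ᵐ ω ∂μ, (μ[X | m]) ω ∈ Set.Icc a b := by
  have hint : Integrable X μ := Integrable.of_mem_Icc a b hX hXab
  filter_upwards [
    condExp_mono (m := m) (integrable_const a) hint (hXab.mono fun _ h => h.1),
    condExp_mono (m := m) hint (integrable_const b) (hXab.mono fun _ h => h.2)] with ω hlo hhi
  rw [condExp_const hm] at hlo hhi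
  exact ⟨hlo, hhi⟩

variable [StandardBorelSpace Ω] [IsFiniteMeasure μ]

lemma ae_trim_condExpKernel_eq (hm : m ≤ m0) {E : Type*} [MeasurableSpace E]
    [MeasurableEq E] {f : Ω → E} (hf : Measurable[m] f) :
    ∀ᵐ ω ∂μ.trim hm, ∀ᵐ ω' ∂condExpKernel μ m ω, f ω' = f ω := by
  refine Measure.ae_ae_of_ae_compProd (p := fun q => f q.2 = f q.1) ?_
  have hdiag : @AEMeasurable Ω (Ω × Ω) (m.prod m0) m0 Function.diag μ :=
    @Measurable.aemeasurable _ _ m0 (m.prod m0) _ _ ((measurable_id'' hm).prodMk measurable_id)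
  rw [compProd_trim_condExpKernel, @ae_map_iff _ _ m0 (m.prod m0) _ _ hdiag]
  · exact .of_forall fun _ => rfl
  · exact measurableSet_eq_fun ((hf.mono hm le_rfl).comp measurable_snd) (hf.comp measurable_fst)

lemma hasCondSubgaussianMGF_sub_condExp_of_mem_Icc (hm : m ≤ m0) (hX : AEMeasurable X μ)
    (hXab : ∀ᵐ ω ∂μ, X ω ∈ Set.Icc a b) :
    HasCondSubgaussianMGF m hm (fun ω => X ω - (μ[X | m]) ω) ((‖b - a‖₊ / 2) ^ 2) μ where
  integrable_exp_mul t := by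
    rw [condExpKernel_comp_trim hm]
    refine integrable_exp_mul_of_mem_Icc (a := a - b) (b := b - a)
      (hX.sub integrable_condExp.aemeasurable) ?_
    filter_upwards [hXab, condExp_mem_Icc_of_mem_Icc hm hX hXab] with ω hω hEω
    exact ⟨by linarith [hω.1, hEω.2], by linarith [hω.2, hEω.1]⟩
  mgf_le := by
    have hcondExp : Measurable[m] (μ[X | m]) := stronglyMeasurable_condExp.measurable
    have hXabκ : ∀ᵐ ω ∂μ.trim hm, ∀ᵐ ω' ∂condExpKernel μ m ω, X ω' ∈ Set.Icc a b :=
      Measure.ae_ae_of_ae_comp (by rwa [condExpKernel_comp_trim hm])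
    filter_upwards [ae_trim_condExpKernel_eq hm hcondExp, hXabκ,
      condExp_ae_eq_trim_integral_condExpKernel hm (Integrable.of_mem_Icc a b hX hXab),
      aestronglyMeasurable_trim_condExpKernel hm hX.aestronglyMeasurable]
      with ω hconst hmem hmean hmk t
    have hXω : AEMeasurable X (condExpKernel μ m ω) :=
      ⟨_, hX.aestronglyMeasurable.stronglyMeasurable_mk.measurable, hmk⟩
    have hcentre : (fun ω' => X ω' - (μ[X | m]) ω')
        =ᵐ[condExpKernel μ m ω] fun ω' => X ω' - ∫ y, X y ∂condExpKernel μ m ω := by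
      filter_upwards [hconst] with ω' hω'
      rw [hω', hmean]
    rw [mgf_congr hcentre]
    exact (hasSubgaussianMGF_of_mem_Icc hXω hmem).mgf_le t

end SubGaussian

section MartingaleDifference

variable {Ω : Type*} {m0 : MeasurableSpace Ω} [StandardBorelSpace Ω] {μ : Measure Ω}
  [IsProbabilityMeasure μ]

lemma hasSubgaussianMGF_sum_sub_condExp_of_mem_Icc {ℱ : Filtration ℕ m0} {X : ℕ → Ω → ℝ}
    {a b : ℝ} (hX : ∀ t, Measurable[ℱ (t + 1)] (X t))
    (hXab : ∀ t, ∀ᵐ ω ∂μ, X t ω ∈ Set.Icc a b) (T : ℕ) :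
    HasSubgaussianMGF (fun ω => ∑ t ∈ range T, (X t ω - (μ[X t | ℱ t]) ω))
      (T * (‖b - a‖₊ / 2) ^ 2) μ := by
  -- Azuma's inequality in Mathlib conditions `Y (t + 1)` on `ℱ t`, hence the shift with `Y 0 = 0`.
  let Y : ℕ → Ω → ℝ
    | 0 => 0
    | t + 1 => fun ω => X t ω - (μ[X t | ℱ t]) ω
  let cY : ℕ → NNReal
    | 0 => 0
    | _ + 1 => (‖b - a‖₊ / 2) ^ 2
  have hadapted : StronglyAdapted ℱ Y
    | 0 => stronglyMeasurable_zero
    | t + 1 => (hX t).stronglyMeasurable.sub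
        (stronglyMeasurable_condExp.mono (ℱ.mono t.le_succ))
  have hsum := HasSubgaussianMGF.sum_of_hasCondSubgaussianMGF (cY := cY) hadapted
    HasSubgaussianMGF.zero (T + 1) fun t _ =>
      hasCondSubgaussianMGF_sub_condExp_of_mem_Icc (ℱ.le t)
        ((hX t).mono (ℱ.le _) le_rfl).aemeasurable (hXab t)
  simpa [Y, cY, sum_range_succ'] using hsum

end MartingaleDifference

section ConditionalLaw

variable {Ω A : Type*} {m m0 : MeasurableSpace Ω} {μ : Measure Ω}

lemma condExp_apply_of_condExp_ite_eq [IsFiniteMeasure μ] [Fintype A] [DecidableEq A]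
    [MeasurableSpace A] [MeasurableSingletonClass A] {a : Ω → A} {g : A → Ω → ℝ}
    (ha : Measurable a) (hg : ∀ b, StronglyMeasurable[m] (g b)) (hgint : ∀ b, Integrable (g b) μ)
    {p : Ω → A → ℝ}
    (hp : ∀ b, μ[fun ω => if a ω = b then (1 : ℝ) else 0 | m] =ᵐ[μ] fun ω => p ω b) :
    μ[fun ω => g (a ω) ω | m] =ᵐ[μ] fun ω => ∑ b, p ω b * g b ω := by
  let ind (b : A) : Ω → ℝ := fun ω => if a ω = b then 1 else 0
  have hmeas (b : A) : AEStronglyMeasurable (ind b) μ :=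
    (Measurable.ite (ha (measurableSet_singleton b)) measurable_const
      measurable_const).aestronglyMeasurable
  have hbdd (b : A) : ∀ᵐ ω ∂μ, ‖ind b ω‖ ≤ 1 := .of_forall fun ω => by
    by_cases h : a ω = b <;> simp [ind, h]
  have hprod (b : A) : Integrable (g b * ind b) μ := (hgint b).mul_bdd (hmeas b) (hbdd b)
  have hpull (b : A) : μ[g b * ind b | m] =ᵐ[μ] fun ω => p ω b * g b ω := by
    filter_upwards [condExp_mul_of_stronglyMeasurable_left (hg b) (hprod b)
      (.of_bound (hmeas b) 1 (hbdd b)), hp b] with ω hmul hω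
    rw [hmul, Pi.mul_apply, hω, mul_comm]
  have hsplit : (fun ω => g (a ω) ω) = ∑ b, g b * ind b := by
    ext ω
    simp [ind]
  rw [hsplit]
  filter_upwards [condExp_finsetSum (fun b _ => hprod b) m, ae_all_iff.2 hpull] with ω hsum hω
  rw [hsum, Finset.sum_apply]
  exact Finset.sum_congr rfl fun b _ => hω b

lemma one_sub_le_measure_sum_mean_sub_apply_le [StandardBorelSpace Ω] [IsProbabilityMeasure μ]
    [Fintype A] [DecidableEq A] [MeasurableSpace A] [MeasurableSingletonClass A]
    {ℱ : Filtration ℕ m0} {a : ℕ → Ω → A} {p : ℕ → Ω → A → ℝ} {g : ℕ → A → Ω → ℝ}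
    (ha : ∀ t, Measurable[ℱ (t + 1)] (a t)) (hg : ∀ t b, Measurable[ℱ t] (g t b))
    (hg1 : ∀ t b ω, |g t b ω| ≤ 1)
    (hp : ∀ t b, μ[fun ω => if a t ω = b then (1 : ℝ) else 0 | ℱ t] =ᵐ[μ] fun ω => p t ω b)
    {δ : ℝ} (hδ : 0 < δ) (hδ1 : δ ≤ 1) (T : ℕ) :
    ENNReal.ofReal (1 - δ) ≤
      μ {ω | ∑ t ∈ range T, (∑ b, p t ω b * g t b ω - g t (a t ω) ω) ≤
        √(2 * T * Real.log (1 / δ))} := by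
  let X : ℕ → Ω → ℝ := fun t ω => g t (a t ω) ω
  have hX (t : ℕ) : Measurable[ℱ (t + 1)] (X t) :=
    (measurable_from_prod_countable_right (f := fun q : A × Ω => g t q.1 q.2) fun b =>
      (hg t b).mono (ℱ.mono t.le_succ) le_rfl).comp ((ha t).prodMk measurable_id)
  have hmean (t : ℕ) : μ[X t | ℱ t] =ᵐ[μ] fun ω => ∑ b, p t ω b * g t b ω :=
    condExp_apply_of_condExp_ite_eq ((ha t).mono (ℱ.le _) le_rfl)
      (fun b => (hg t b).stronglyMeasurable) (fun b => .of_bound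
        ((hg t b).mono (ℱ.le t) le_rfl).aestronglyMeasurable 1 (.of_forall (hg1 t b))) (hp t)
  have hsubG := (hasSubgaussianMGF_sum_sub_condExp_of_mem_Icc (μ := μ) hX
    (fun t => .of_forall fun ω => abs_le.mp (hg1 t (a t ω) ω)) T).neg
  have hparam : (T * (‖(1 : ℝ) - -1‖₊ / 2) ^ 2 : NNReal) = T := by
    norm_num [← NNReal.coe_inj]
  rw [hparam] at hsubG
  refine (one_sub_le_measure_le_of_hasSubgaussianMGF hsubG hδ hδ1).trans (measure_mono_ae ?_)
  filter_upwards [ae_all_iff.2 hmean] with ω hω hdev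
  refine le_of_eq_of_le ?_ hdev
  simp only [Pi.neg_apply, ← sum_neg_distrib, neg_sub, hω, X]

end ConditionalLaw

theorem stmt_17_general {Ω : Type*} {m0 : MeasurableSpace Ω} [StandardBorelSpace Ω]
    (μ : Measure Ω) [IsProbabilityMeasure μ] (ℱ : Filtration ℕ m0)
    {A n : Type*} [Fintype A] [DecidableEq A] [MeasurableSpace A] [MeasurableSingletonClass A]
    [Fintype n] [DecidableEq n] (hcard : Fintype.card A = 2) (T : ℕ) {δ γ : ℝ} (hδ : 0 < δ)
    (hδ1 : δ ≤ 1) (θ : n → ℝ) (z : ℕ → A → Ω → n → ℝ) (hzmeas : ∀ t b, Measurable[ℱ t] (z t b))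
    (hθz : ∀ t b ω, |θ ⬝ᵥ z t b ω| ≤ 1) (a : ℕ → Ω → A) (π : ℕ → Ω → A → ℝ)
    (hameas : ∀ t, Measurable[ℱ (t + 1)] (a t))
    (hπlaw : ∀ t b, μ[fun ω => if a t ω = b then (1 : ℝ) else 0 | ℱ t] =ᵐ[μ] fun ω => π t ω b)
    (Γ : ℕ → Ω → Matrix n n ℝ) (hΓ : ∀ t ω, (Γ t ω).PosDef) (θhat : ℕ → Ω → n → ℝ)
    (hπ : ∀ t ω, IsEliminationPolicy (Γ t ω) γ (θhat t ω) (fun b => z t b ω) (π t ω))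
    (hest : ∀ ω, ∀ t < T, mahalanobisNorm (Γ t ω) (θhat t ω - θ) ≤ γ) (o : ℕ → Ω → A) :
    ENNReal.ofReal (1 - δ) ≤
      μ {ω | ∑ t ∈ range T, θ ⬝ᵥ (z t (o t ω) ω - z t (a t ω) ω) ≤
        √(2 * T * Real.log (1 / δ)) +
          2 * γ * ∑ t ∈ range T, √(((Γ t ω)⁻¹ * policyCov (π t ω) fun b => z t b ω).trace)} := by
  have hreward (t : ℕ) (b : A) : Measurable[ℱ t] fun ω => θ ⬝ᵥ z t b ω :=
    (Continuous.dotProduct continuous_const continuous_id).measurable.comp (hzmeas t b)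
  refine (one_sub_le_measure_sum_mean_sub_apply_le hameas hreward hθz hπlaw hδ hδ1 T).trans
    (measure_mono fun ω hω => ?_)
  calc ∑ t ∈ range T, θ ⬝ᵥ (z t (o t ω) ω - z t (a t ω) ω)
      = ∑ t ∈ range T, (∑ b, π t ω b * (θ ⬝ᵥ z t b ω) - θ ⬝ᵥ z t (a t ω) ω) +
        ∑ t ∈ range T, θ ⬝ᵥ (z t (o t ω) ω - policyMean (π t ω) fun b => z t b ω) := by
        rw [← sum_add_distrib]
        refine sum_congr rfl fun t _ => ?_
        rw [dotProduct_sub, dotProduct_sub, dotProduct_policyMean]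
        ring
    _ ≤ √(2 * T * Real.log (1 / δ)) + ∑ t ∈ range T,
          2 * γ * √(((Γ t ω)⁻¹ * policyCov (π t ω) fun b => z t b ω).trace) :=
        add_le_add hω (sum_le_sum fun t ht => (hπ t ω).dotProduct_sub_policyMean_le hcard (hΓ t ω)
          (hest ω t (mem_range.mp ht)) (o t ω))
    _ = √(2 * T * Real.log (1 / δ)) + 2 * γ * ∑ t ∈ range T,
          √(((Γ t ω)⁻¹ * policyCov (π t ω) fun b => z t b ω).trace) := by
        rw [← mul_sum]

/-- **Regret of the elimination strategy, two-action case (Lemma: selection_two_arm).**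
Semiparametric contextual bandit with two actions.  At round `t`, an action `b` *survives* if
for every `b'`, `⟨θ̂_t, z_{t,b'} − z_{t,b}⟩ ≤ γ(T) ‖z_{t,b} − z_{t,b'}‖_{Γ_t⁻¹}`; the learner
plays the surviving action deterministically if the other is eliminated, and otherwise plays
uniformly at random; `π_t` is the resulting action distribution and `μ_t = E_{a∼π_t}[z_{t,a}]`.
Assuming `‖θ̂_t − θ‖_{Γ_t} ≤ γ(T)` for all rounds `t < T`, with probability at least `1 − δ`,
`Reg(T) ≤ √(2T log(1/δ)) + 2γ(T) ∑_{t<T} √(tr(Γ_t⁻¹ Cov_{b∼π_t}(z_{t,b})))`. -/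
theorem stmt_17 {Ω : Type*} {m0 : MeasurableSpace Ω} [StandardBorelSpace Ω] [Nonempty Ω]
    (μ : Measure Ω) [IsProbabilityMeasure μ]
    (ℱ : Filtration ℕ m0)
    {A : Type*} [Fintype A] [DecidableEq A] [Nonempty A] [MeasurableSpace A]
    [MeasurableSingletonClass A]
    (hcard : Fintype.card A = 2)
    {d T : ℕ} (hd : 0 < d)
    (δ lam γ : ℝ) (hδ : 0 < δ) (hδ1 : δ < 1) (hlam : 0 < lam) (hγ : 0 ≤ γ)
    (θ : Fin d → ℝ) (hθ : Real.sqrt (θ ⬝ᵥ θ) ≤ 1)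
    -- context features, confounder and noise: adapted, adversarial, bounded
    (z : ℕ → A → Ω → (Fin d → ℝ)) (f : ℕ → Ω → ℝ) (ξ : ℕ → Ω → ℝ)
    (hzmeas : ∀ t b, Measurable[ℱ t] (z t b))
    (hzbd : ∀ t b ω, Real.sqrt (z t b ω ⬝ᵥ z t b ω) ≤ 1)
    (hfmeas : ∀ t, Measurable[ℱ t] (f t))
    (hfbd : ∀ t ω, f t ω ∈ Set.Icc (-1 : ℝ) 1)
    (hξmeas : ∀ t, Measurable[ℱ (t + 1)] (ξ t))
    (hξbd : ∀ t ω, |ξ t ω| ≤ 1)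
    (hξcent : ∀ t, μ[ξ t | ℱ t] =ᵐ[μ] 0)
    -- the action and its conditional distribution
    (a : ℕ → Ω → A) (π : ℕ → Ω → A → ℝ)
    (hameas : ∀ t, Measurable[ℱ (t + 1)] (a t))
    (hπmeas : ∀ t b, Measurable[ℱ t] (fun ω => π t ω b))
    (hπprob : ∀ t ω, (∀ b, 0 ≤ π t ω b) ∧ (∑ b, π t ω b) = 1)
    (hπlaw : ∀ t b, μ[(fun ω => if a t ω = b then (1 : ℝ) else 0) | ℱ t]
      =ᵐ[μ] fun ω => π t ω b)
    (haξ : ∀ t, CondIndepFun (ℱ t) (ℱ.le t) (a t) (ξ t) μ)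
    -- rewards, mean features, estimator, covariance
    (r : ℕ → Ω → ℝ) (hr : ∀ t ω, r t ω = θ ⬝ᵥ z t (a t ω) ω + f t ω + ξ t ω)
    (mu : ℕ → Ω → (Fin d → ℝ)) (hmu : ∀ t ω, mu t ω = ∑ b, π t ω b • z t b ω)
    (Γ : ℕ → Ω → Matrix (Fin d) (Fin d) ℝ)
    (hΓ : ∀ t ω, Γ t ω = lam • (1 : Matrix (Fin d) (Fin d) ℝ) +
      ∑ τ ∈ Finset.range t,
        vecMulVec (z τ (a τ ω) ω - mu τ ω) (z τ (a τ ω) ω - mu τ ω))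
    (θhat : ℕ → Ω → (Fin d → ℝ))
    (hθhat : ∀ t ω, θhat t ω =
      (Γ t ω)⁻¹.mulVec (∑ τ ∈ Finset.range t, r τ ω • (z τ (a τ ω) ω - mu τ ω)))
    (Cov : ℕ → Ω → Matrix (Fin d) (Fin d) ℝ)
    (hCov : ∀ t ω, Cov t ω =
      (∑ b, π t ω b • vecMulVec (z t b ω) (z t b ω)) - vecMulVec (mu t ω) (mu t ω))
    -- the surviving (non-eliminated) actions and the action-selection rule
    (surv : ℕ → Ω → A → Prop)
    (hsurv : ∀ t ω b, surv t ω b ↔ ∀ b',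
      θhat t ω ⬝ᵥ (z t b' ω - z t b ω) ≤
        γ * Real.sqrt ((z t b ω - z t b' ω) ⬝ᵥ (Γ t ω)⁻¹.mulVec (z t b ω - z t b' ω)))
    (hπboth : ∀ t ω, (∀ b, surv t ω b) → ∀ b, π t ω b = 1 / 2)
    (hπone : ∀ t ω b, surv t ω b → (∃ b', ¬ surv t ω b') →
      ∀ b', π t ω b' = if b' = b then 1 else 0)
    -- the optimal action and the assumed estimator guarantee
    (astar : ℕ → Ω → A) (hastar : ∀ t ω b, θ ⬝ᵥ z t b ω ≤ θ ⬝ᵥ z t (astar t ω) ω)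
    (hest : ∀ ω, ∀ t < T,
      Real.sqrt ((θhat t ω - θ) ⬝ᵥ (Γ t ω).mulVec (θhat t ω - θ)) ≤ γ) :
    ENNReal.ofReal (1 - δ) ≤
      μ {ω | ∑ t ∈ Finset.range T, θ ⬝ᵥ (z t (astar t ω) ω - z t (a t ω) ω) ≤
        Real.sqrt (2 * T * Real.log (1 / δ)) +
          2 * γ * ∑ t ∈ Finset.range T, Real.sqrt (((Γ t ω)⁻¹ * Cov t ω).trace)} := by
  have hΓpos (t : ℕ) (ω : Ω) : (Γ t ω).PosDef :=
    hΓ t ω ▸ posDef_smul_one_add_sum_vecMulVec hlam _ _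
  have hπelim (t : ℕ) (ω : Ω) :
      IsEliminationPolicy (Γ t ω) γ (θhat t ω) (fun b => z t b ω) (π t ω) :=
    isEliminationPolicy_of_survival hcard hγ
      (fun b => by simp only [hsurv, Eliminates, mahalanobisNorm, not_lt]) (hπboth t ω) (hπone t ω)
  have hθz (t : ℕ) (b : A) (ω : Ω) : |θ ⬝ᵥ z t b ω| ≤ 1 :=
    (abs_dotProduct_le_sqrt_mul_sqrt θ _).trans (mul_le_one₀ hθ (Real.sqrt_nonneg _) (hzbd t b ω))
  simpa only [hCov, hmu, policyCov, policyMean] using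
    stmt_17_general μ ℱ hcard T hδ hδ1.le θ z hzmeas hθz a π hameas hπlaw Γ hΓpos θhat hπelim
      hest astar
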